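/- The smooth Hinge loss ψ_G(α;σ) converges to the Hinge loss max{0,1−α} uniformly in α as σ → 0⁺; that is, for every ε > 0 there exists δ > 0 such that for all σ ∈ (0,δ) and all α ∈ ℝ, |ψ_G(α;σ) − max{0,1−α}| < ε. -/

import Mathlib

open Real Set

/-- The probability density function of the standard normal distribution. -/
noncomputable def stdGaussPDF (v : ℝ) : ℝ :=
  (1 / Real.sqrt (2 * Real.pi)) * Real.exp (-v ^ 2 / 2)

/-- The cumulative distribution function of the standard normal distribution. -/
noncomputable def stdGaussCDF (v : ℝ) : ℝ :=
  ∫ t in Set.Iic v, stdGaussPDF t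

/-- The smooth Hinge loss ψ_G(α;σ) = Φ(v)(1−α) + φ(v)σ with v = (1−α)/σ. -/
noncomputable def psiG (σ α : ℝ) : ℝ :=
  stdGaussCDF ((1 - α) / σ) * (1 - α) + stdGaussPDF ((1 - α) / σ) * σ

/-!
Let `Z` be a standard normal variable. Since `φ' t = -t φ t`, one has
`Φ v * v + φ v = ∫ t in Iic v, (v - t) φ t = E[max 0 (v - Z)]`, so that
`ψ_G(α; σ) = E[max 0 (1 - α - σ Z)]`: the smooth Hinge loss averages the Hinge loss over a Gaussian
perturbation of size `σ`. As `max 0` is 1-Lipschitz, the two losses differ by at most `σ E|Z|`,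
whatever `α` is.
-/

open MeasureTheory ProbabilityTheory

open scoped NNReal

lemma norm_integral_comp_sub_le_of_lipschitzWith {Ω E F : Type*} [MeasurableSpace Ω]
    {μ : Measure Ω} [IsProbabilityMeasure μ] [PseudoMetricSpace E] [NormedAddCommGroup F]
    [NormedSpace ℝ F] [CompleteSpace F] {K : ℝ≥0} {f : E → F} (hf : LipschitzWith K f)
    {X : Ω → E} (hX : AEStronglyMeasurable X μ) {x : E}
    (hdist : Integrable (fun ω ↦ dist (X ω) x) μ) :
    ‖∫ ω, f (X ω) ∂μ - f x‖ ≤ K * ∫ ω, dist (X ω) x ∂μ := by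
  have hbound (ω : Ω) : ‖f (X ω) - f x‖ ≤ K * dist (X ω) x := by
    simpa only [dist_eq_norm] using hf.dist_le_mul (X ω) x
  have hdiff : Integrable (fun ω ↦ f (X ω) - f x) μ :=
    (hdist.const_mul (K : ℝ)).mono'
      ((hf.continuous.comp_aestronglyMeasurable hX).sub aestronglyMeasurable_const)
      (.of_forall hbound)
  have hcomp : Integrable (fun ω ↦ f (X ω)) μ := by
    simpa only [sub_add_cancel] using hdiff.fun_add (integrable_const (f x))
  calc ‖∫ ω, f (X ω) ∂μ - f x‖ = ‖∫ ω, (f (X ω) - f x) ∂μ‖ := by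
        rw [integral_sub hcomp (integrable_const _), integral_const, probReal_univ, one_smul]
    _ ≤ ∫ ω, K * dist (X ω) x ∂μ :=
        norm_integral_le_of_norm_le (hdist.const_mul _) (.of_forall hbound)
    _ = K * ∫ ω, dist (X ω) x ∂μ := integral_const_mul _ _

lemma stdGaussPDF_eq_gaussianPDFReal : stdGaussPDF = gaussianPDFReal 0 1 := by
  ext v
  simp [stdGaussPDF, gaussianPDFReal]

lemma integrable_stdGaussPDF : Integrable stdGaussPDF :=
  stdGaussPDF_eq_gaussianPDFReal ▸ integrable_gaussianPDFReal 0 1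

lemma integral_gaussianReal_zero_one_eq_integral_smul {E : Type*} [NormedAddCommGroup E]
    [NormedSpace ℝ E] (f : ℝ → E) : ∫ t, f t ∂gaussianReal 0 1 = ∫ t, stdGaussPDF t • f t := by
  rw [stdGaussPDF_eq_gaussianPDFReal, integral_gaussianReal_eq_integral_smul one_ne_zero]

lemma hasDerivAt_stdGaussPDF (v : ℝ) : HasDerivAt stdGaussPDF (-(v * stdGaussPDF v)) v := by
  have hexponent : HasDerivAt (fun t : ℝ ↦ -t ^ 2 / 2) (-v) v :=
    ((hasDerivAt_pow 2 v).fun_neg.div_const 2).congr_deriv (by push_cast; ring)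
  exact (hexponent.exp.const_mul (1 / √(2 * π))).congr_deriv (by rw [stdGaussPDF]; ring)

lemma integrable_id_mul_stdGaussPDF : Integrable fun t ↦ t * stdGaussPDF t := by
  have h := (integrable_mul_exp_neg_mul_sq (b := 1 / 2) (by norm_num)).const_mul (1 / √(2 * π))
  refine h.congr (.of_forall fun t ↦ ?_)
  simp only [stdGaussPDF]
  ring_nf

lemma setIntegral_Iic_id_mul_stdGaussPDF (v : ℝ) :
    ∫ t in Iic v, t * stdGaussPDF t = -stdGaussPDF v := by
  have hderiv (t : ℝ) (_ : t ∈ Iic v) := hasDerivAt_stdGaussPDF t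
  have hint := integrable_id_mul_stdGaussPDF.neg.integrableOn (s := Iic v)
  have hlim := tendsto_zero_of_hasDerivAt_of_integrableOn_Iic hderiv hint
    integrable_stdGaussPDF.integrableOn
  have hFTC := integral_Iic_of_hasDerivAt_of_tendsto' hderiv hint hlim
  rwa [integral_neg, sub_zero, neg_eq_iff_eq_neg] at hFTC

lemma stdGaussCDF_mul_add_stdGaussPDF (v : ℝ) :
    stdGaussCDF v * v + stdGaussPDF v = ∫ t, max 0 (v - t) ∂gaussianReal 0 1 := by
  have hindicator (t : ℝ) : stdGaussPDF t • max 0 (v - t) =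
      (Iic v).indicator (fun t ↦ stdGaussPDF t * v - t * stdGaussPDF t) t := by
    rcases le_or_gt t v with htv | hvt
    · rw [indicator_of_mem (mem_Iic.2 htv), max_eq_right (sub_nonneg.2 htv), smul_eq_mul]
      ring
    · rw [indicator_of_notMem (notMem_Iic.2 hvt), max_eq_left (sub_nonpos.2 hvt.le), smul_zero]
  simp only [integral_gaussianReal_zero_one_eq_integral_smul, hindicator]
  rw [integral_indicator measurableSet_Iic,
    integral_sub (integrable_stdGaussPDF.mul_const v).integrableOn
      integrable_id_mul_stdGaussPDF.integrableOn,
    integral_mul_const, setIntegral_Iic_id_mul_stdGaussPDF, sub_neg_eq_add, stdGaussCDF]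

lemma psiG_eq_integral_gaussianReal {σ : ℝ} (hσ : 0 < σ) (α : ℝ) :
    psiG σ α = ∫ t, max 0 (1 - α - σ * t) ∂gaussianReal 0 1 := by
  have hscale (t : ℝ) : max 0 (1 - α - σ * t) = σ * max 0 ((1 - α) / σ - t) := by
    rw [mul_max_of_nonneg _ _ hσ.le, mul_zero, mul_sub, mul_div_cancel₀ _ hσ.ne']
  simp only [hscale]
  rw [integral_const_mul, ← stdGaussCDF_mul_add_stdGaussPDF, psiG]
  field_simp

lemma abs_psiG_sub_max_le {σ : ℝ} (hσ : 0 < σ) (α : ℝ) :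
    |psiG σ α - max 0 (1 - α)| ≤ (∫ t, |t| ∂gaussianReal 0 1) * σ := by
  have hdist (t : ℝ) : dist (1 - α - σ * t) (1 - α) = |t| * σ := by
    rw [Real.dist_eq, sub_sub_cancel_left, abs_neg, abs_mul, abs_of_pos hσ, mul_comm]
  have habs : Integrable (fun t : ℝ ↦ |t|) (gaussianReal 0 1) :=
    ((memLp_id_gaussianReal 1).integrable le_rfl).abs
  have hmeas : AEStronglyMeasurable (fun t ↦ 1 - α - σ * t) (gaussianReal 0 1) := by fun_prop
  have hsmooth := norm_integral_comp_sub_le_of_lipschitzWith (LipschitzWith.id.const_max 0)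
    hmeas (x := 1 - α) (by simpa only [hdist] using habs.mul_const σ)
  simpa only [id_eq, hdist, ← psiG_eq_integral_gaussianReal hσ, Real.norm_eq_abs, NNReal.coe_one,
    one_mul, integral_mul_const] using hsmooth

theorem stmt_4 :
    ∀ ε : ℝ, 0 < ε → ∃ δ : ℝ, 0 < δ ∧
      ∀ σ : ℝ, 0 < σ → σ < δ → ∀ α : ℝ, |psiG σ α - max 0 (1 - α)| < ε := by
  intro ε hε
  have hmoment : 0 ≤ ∫ t, |t| ∂gaussianReal 0 1 := integral_nonneg fun t ↦ abs_nonneg t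
  obtain ⟨δ, hδ, hδε⟩ := exists_pos_mul_lt hε (∫ t, |t| ∂gaussianReal 0 1)
  refine ⟨δ, hδ, fun σ hσ hσδ α ↦ ?_⟩
  calc |psiG σ α - max 0 (1 - α)| ≤ (∫ t, |t| ∂gaussianReal 0 1) * σ :=
        abs_psiG_sub_max_le hσ α
    _ ≤ (∫ t, |t| ∂gaussianReal 0 1) * δ := mul_le_mul_of_nonneg_left hσδ.le hmoment
    _ < ε := hδε
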